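/- The 1-form α = (2r² − 1)dz + r²(r² − 1)dθ + Σᵢ ρᵢ² dφᵢ on ℝ^{2n+1} (with coordinates z, polar (r,θ), and polar (ρᵢ, φᵢ) for i = 1,…,n−1) is a contact form, i.e., α ∧ (dα)^n is nowhere vanishing. -/

import Mathlib

/-!
Write `s = r²`. Then `α = α₃ + λ`, where `α₃` lives on `ℝ_z × ℝ²_{(r,θ)}` and `λ = Σᵢ ρᵢ² dφᵢ` on
the remaining planes, with `dλ = 2 Ω` for the standard symplectic form `Ω` in `n - 1` pairs of
variables. Since `(dα₃)² = 0`, `(dλ)ⁿ = 0` and `λ ∧ (dλ)ⁿ⁻¹ = 0` for degree reasons,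
`α ∧ (dα)ⁿ = n α₃ ∧ dα₃ ∧ (dλ)ⁿ⁻¹`, and `α₃ ∧ dα₃ = ((2 s - 1)² + 1) dz ∧ dx ∧ dy`.
-/

/-- The `k`-th coordinate of a point of `ℝ^{2n+1}` (as a total function of
`k : ℕ`, defaulting to `0` out of range).  Coordinate `0` is `z`, coordinates
`1, 2` are the Cartesian coordinates `x, y` of the `(r,θ)`-plane, and
coordinates `2i+3, 2i+4` are the Cartesian coordinates `xᵢ, yᵢ` of the
`(ρᵢ, φᵢ)`-plane, `i = 0, …, n-2`. -/
def coordAt (n : ℕ) (p : Fin (2 * n + 1) → ℝ) (k : ℕ) : ℝ :=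
  if hk : k < 2 * n + 1 then p ⟨k, hk⟩ else 0

/-- The coefficient of `dx_j` in Cartesian coordinates of the 1-form
`α = (2r² − 1)dz + r²(r² − 1)dθ + Σᵢ ρᵢ² dφᵢ` on `ℝ^{2n+1}`, using
`r² dθ = x dy − y dx` and `ρᵢ² dφᵢ = xᵢ dyᵢ − yᵢ dxᵢ`:
the `dz`-coefficient is `2r² − 1`, the `dx`-coefficient is `−(r² − 1)y`, the
`dy`-coefficient is `(r² − 1)x`, the `dxᵢ`-coefficient is `−yᵢ` and the
`dyᵢ`-coefficient is `xᵢ`. -/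
noncomputable def moriCoeff (n : ℕ) (j : ℕ) (p : Fin (2 * n + 1) → ℝ) : ℝ :=
  let r2 : ℝ := coordAt n p 1 ^ 2 + coordAt n p 2 ^ 2
  if j = 0 then 2 * r2 - 1
  else if j = 1 then -((r2 - 1) * coordAt n p 2)
  else if j = 2 then (r2 - 1) * coordAt n p 1
  else if j % 2 = 1 then -coordAt n p (j + 1)
  else coordAt n p (j - 1)

section SquareZero

variable {A : Type*} [Semiring A]

theorem add_pow_succ_of_mul_self_eq_zero {x y : A} (h : Commute x y) (hx : x * x = 0) (m : ℕ) :
    (x + y) ^ (m + 1) = y ^ (m + 1) + (m + 1) • (x * y ^ m) := by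
  induction m with
  | zero => simp [add_comm]
  | succ m ih =>
    have hxx : x * (x * y ^ m) = 0 := by rw [← mul_assoc, hx, zero_mul]
    have hyx : y * (x * y ^ m) = x * y ^ (m + 1) := by
      rw [← mul_assoc, ← h.eq, mul_assoc, ← pow_succ']
    rw [pow_succ', ih, add_mul, mul_add, mul_add, mul_smul_comm, mul_smul_comm, hxx, hyx,
      smul_zero, add_zero, ← pow_succ', succ_nsmul _ (m + 1)]
    abel

theorem sum_pow_card_succ_eq_zero {κ : Type*} {x : κ → A} (hc : ∀ i j, Commute (x i) (x j))
    (hx : ∀ i, x i * x i = 0) (s : Finset κ) : (∑ i ∈ s, x i) ^ (s.card + 1) = 0 := by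
  induction s using Finset.cons_induction with
  | empty => simp
  | cons i s hi ih =>
    rw [Finset.sum_cons, Finset.card_cons]
    exact (Commute.sum_right _ _ _ fun j _ => hc i j).add_pow_eq_zero_of_add_le_succ_of_pow_eq_zero
      ((sq _).trans (hx i)) ih (by lia)

theorem sum_pow_eq_factorial_smul_prod {m : ℕ} {x : Fin m → A} (hc : ∀ i j, Commute (x i) (x j))
    (hx : ∀ i, x i * x i = 0) : (∑ i, x i) ^ m = m.factorial • (List.ofFn x).prod := by
  induction m with
  | zero => simp
  | succ m ih =>
    have htail : (∑ i : Fin m, x i.succ) ^ (m + 1) = 0 := by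
      simpa using sum_pow_card_succ_eq_zero (fun i j => hc (Fin.succ i) (Fin.succ j))
        (fun i => hx i.succ) Finset.univ
    rw [Fin.sum_univ_succ,
      add_pow_succ_of_mul_self_eq_zero (Commute.sum_right _ _ _ fun j _ => hc 0 j.succ) (hx 0),
      htail, zero_add, ih (fun i j => hc i.succ j.succ) fun i => hx i.succ, mul_smul_comm,
      smul_smul, List.ofFn_succ, List.prod_cons, Nat.factorial_succ]

theorem mul_prod_ofFn_eq_zero {m : ℕ} {x : Fin m → A} (hc : ∀ i j, Commute (x i) (x j)) {a : A}
    {i : Fin m} (ha : a * x i = 0) : a * (List.ofFn x).prod = 0 := by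
  classical
  have hmem : x i ∈ List.ofFn x := List.mem_ofFn.2 ⟨i, rfl⟩
  have hcomm : ∀ y ∈ List.ofFn x, ∀ z ∈ List.ofFn x, y * z = z * y := by
    simp only [List.forall_mem_ofFn_iff]
    exact hc
  rw [← List.prod_erase_of_comm hmem hcomm, ← mul_assoc, ha, zero_mul]

theorem add_mul_add_pow_succ {α ω l Ω : A} {m : ℕ} (hc : Commute ω Ω) (hω : ω * ω = 0)
    (hl : l * Ω ^ m = 0) (hΩ : Ω ^ (m + 1) = 0) :
    (α + l) * (ω + Ω) ^ (m + 1) = (m + 1) • (α * ω * Ω ^ m) := by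
  have hlω : l * (ω * Ω ^ m) = 0 := by
    rw [(hc.pow_right m).eq, ← mul_assoc, hl, zero_mul]
  rw [add_pow_succ_of_mul_self_eq_zero hc hω, hΩ, zero_add, mul_smul_comm, add_mul, hlω, add_zero,
    mul_assoc]

end SquareZero

open ExteriorAlgebra (ι ιMulti_apply ι_sq_zero)

section ExteriorAlgebra

variable {R M : Type*} [CommRing R] [AddCommGroup M] [Module R M]

theorem ι_mul_ι_swap (u v : M) : ι R u * ι R v = -(ι R v * ι R u) :=
  eq_neg_of_add_eq_zero_left (ExteriorAlgebra.ι_add_mul_swap u v)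

theorem commute_ι_mul_ι_ι (u v w : M) : Commute (ι R u * ι R v) (ι R w) := by
  rw [Commute, SemiconjBy, mul_assoc, ι_mul_ι_swap v w, mul_neg, ← mul_assoc, ι_mul_ι_swap u w,
    neg_mul, neg_neg, mul_assoc]

theorem ι_mul_ι_mul_self (u : M) (x : ExteriorAlgebra R M) : ι R u * (ι R u * x) = 0 := by
  rw [← mul_assoc, ι_sq_zero, zero_mul]

theorem ι_mul_ι_mul_self_right (u v : M) : ι R v * (ι R u * ι R v) = 0 := by
  rw [← (commute_ι_mul_ι_ι u v v).eq, mul_assoc, ι_sq_zero, mul_zero]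

theorem commute_ι_mul_ι (x y u v : M) : Commute (ι R x * ι R y) (ι R u * ι R v) :=
  (commute_ι_mul_ι_ι x y u).mul_right (commute_ι_mul_ι_ι x y v)

theorem ι_mul_ι_mul_ι_mul_ι_self (x y : M) : ι R x * ι R y * (ι R x * ι R y) = 0 := by
  rw [mul_assoc, ι_mul_ι_mul_self_right, mul_zero]

theorem ι_mul_ι_mul_ι_rotate (u v w : M) :
    ι R v * (ι R w * ι R u) = ι R u * (ι R v * ι R w) := by
  rw [← mul_assoc, (commute_ι_mul_ι_ι v w u).eq]

/-- The 2-form with coefficients `p, q, r` on the span of `u, v, w`, in the basis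
`v ∧ w, w ∧ u, u ∧ v`. -/
def twoForm (u v w : M) (p q r : R) : ExteriorAlgebra R M :=
  p • (ι R v * ι R w) + q • (ι R w * ι R u) + r • (ι R u * ι R v)

theorem commute_twoForm_ι (u v w : M) (p q r : R) (x : M) :
    Commute (twoForm u v w p q r) (ι R x) :=
  (((commute_ι_mul_ι_ι _ _ _).smul_left _).add_left
    ((commute_ι_mul_ι_ι _ _ _).smul_left _)).add_left ((commute_ι_mul_ι_ι _ _ _).smul_left _)

theorem one_form_mul_twoForm (u v w : M) (a b c p q r : R) :
    (a • ι R u + b • ι R v + c • ι R w) * twoForm u v w p q r =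
      (a * p + b * q + c * r) • (ι R u * (ι R v * ι R w)) := by
  simp only [twoForm, mul_add, add_mul, smul_mul_assoc, mul_smul_comm, ι_mul_ι_mul_self,
    ι_mul_ι_mul_self_right, ι_mul_ι_mul_ι_rotate u v w, ← ι_mul_ι_mul_ι_rotate w u v, smul_zero]
  module

theorem twoForm_mul_self (u v w : M) (p q r : R) :
    twoForm u v w p q r * twoForm u v w p q r = 0 := by
  have hu : ι R u * twoForm u v w p q r = p • (ι R u * (ι R v * ι R w)) := by
    simpa using one_form_mul_twoForm u v w 1 0 0 p q r
  have hv : ι R v * twoForm u v w p q r = q • (ι R u * (ι R v * ι R w)) := by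
    simpa using one_form_mul_twoForm u v w 0 1 0 p q r
  have hw : ι R w * twoForm u v w p q r = r • (ι R u * (ι R v * ι R w)) := by
    simpa using one_form_mul_twoForm u v w 0 0 1 p q r
  have hv0 : ι R v * (ι R u * (ι R v * ι R w)) = 0 := by
    rw [← ι_mul_ι_mul_ι_rotate, ι_mul_ι_mul_self]
  have hw0 : ι R w * (ι R u * (ι R v * ι R w)) = 0 := by
    rw [← ι_mul_ι_mul_ι_rotate, ← ι_mul_ι_mul_ι_rotate, ι_mul_ι_mul_self]
  conv_lhs => enter [1]; rw [twoForm]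
  simp only [add_mul, smul_mul_assoc, mul_assoc, hu, hv, hw, mul_smul_comm, ι_mul_ι_mul_self, hv0,
    hw0, smul_zero, add_zero]

/-- The standard symplectic form `Σᵢ eᵢ ∧ fᵢ` in the variables `eᵢ, fᵢ`. -/
def symplecticForm (R : Type*) {M : Type*} [CommRing R] [AddCommGroup M] [Module R M] {m : ℕ}
    (e f : Fin m → M) : ExteriorAlgebra R M :=
  ∑ i, ι R (e i) * ι R (f i)

variable {m : ℕ} (e f : Fin m → M)

theorem symplecticForm_pow :
    symplecticForm R e f ^ m =
      m.factorial • (List.ofFn fun i => ι R (e i) * ι R (f i)).prod :=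
  sum_pow_eq_factorial_smul_prod (fun _ _ => commute_ι_mul_ι _ _ _ _)
    fun _ => ι_mul_ι_mul_ι_mul_ι_self _ _

theorem symplecticForm_pow_succ : symplecticForm R e f ^ (m + 1) = 0 := by
  simpa [symplecticForm] using sum_pow_card_succ_eq_zero
    (x := fun i => ι R (e i) * ι R (f i)) (fun _ _ => commute_ι_mul_ι _ _ _ _)
    (fun _ => ι_mul_ι_mul_ι_mul_ι_self _ _) Finset.univ

theorem one_form_mul_symplecticForm_pow (b c : Fin m → R) :
    (∑ i, (b i • ι R (e i) + c i • ι R (f i))) * symplecticForm R e f ^ m = 0 := by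
  have hkill {x : M} {i : Fin m} (hx : ι R x * (ι R (e i) * ι R (f i)) = 0) :
      ι R x * symplecticForm R e f ^ m = 0 := by
    rw [symplecticForm_pow, mul_smul_comm,
      mul_prod_ofFn_eq_zero (fun _ _ => commute_ι_mul_ι _ _ _ _) hx, smul_zero]
  simp only [Finset.sum_mul, add_mul, smul_mul_assoc, hkill (ι_mul_ι_mul_self _ _),
    hkill (ι_mul_ι_mul_self_right _ _), smul_zero, add_zero, Finset.sum_const_zero]

theorem commute_twoForm_symplecticForm (u v w : M) (p q r : R) :
    Commute (twoForm u v w p q r) (symplecticForm R e f) :=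
  Commute.sum_right _ _ _ fun _ _ =>
    (commute_twoForm_ι _ _ _ _ _ _ _).mul_right (commute_twoForm_ι _ _ _ _ _ _ _)

theorem one_form_mul_twoForm_add_symplecticForm_pow_succ (u v w : M)
    (a₀ a₁ a₂ p q r t : R) (b c : Fin m → R) :
    (a₀ • ι R u + a₁ • ι R v + a₂ • ι R w + ∑ i, (b i • ι R (e i) + c i • ι R (f i))) *
        (twoForm u v w p q r + t • symplecticForm R e f) ^ (m + 1) =
      ((m + 1).factorial * t ^ m * (a₀ * p + a₁ * q + a₂ * r)) •
        (ι R u * (ι R v * ι R w) * (List.ofFn fun i => ι R (e i) * ι R (f i)).prod) := by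
  have hlast : (∑ i, (b i • ι R (e i) + c i • ι R (f i))) * (t • symplecticForm R e f) ^ m = 0 := by
    rw [smul_pow, mul_smul_comm, one_form_mul_symplecticForm_pow e f, smul_zero]
  have hpow : (t • symplecticForm R e f) ^ (m + 1) = 0 := by
    rw [smul_pow, symplecticForm_pow_succ, smul_zero]
  rw [add_mul_add_pow_succ ((commute_twoForm_symplecticForm e f u v w p q r).smul_right t)
      (twoForm_mul_self u v w p q r) hlast hpow, one_form_mul_twoForm, smul_pow,
    symplecticForm_pow]
  simp only [smul_mul_assoc, mul_smul_comm, ← Nat.cast_smul_eq_nsmul R, smul_smul,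
    Nat.factorial_succ]
  push_cast
  congr 1
  ring

theorem prod_ofFn_ι_ne_zero {K E : Type*} [Field K] [AddCommGroup E] [Module K E] {N : ℕ}
    {v : Fin N → E} (hv : LinearIndependent K v) : (List.ofFn fun i => ι K (v i)).prod ≠ 0 := by
  have h := (exteriorPower.ιMulti_family_linearIndependent_field (n := N) hv).ne_zero
    (Set.powersetCard.ofFinEmbEquiv (OrderIso.refl (Fin N)).toOrderEmbedding)
  rw [ne_eq, ← Submodule.coe_eq_zero] at h
  simpa [ιMulti_apply] using h

end ExteriorAlgebra

section Coordinates

variable {n : ℕ}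

/-- The index of the first Cartesian coordinate of the `i`-th plane of `ℝ × (ℝ²)ⁿ`; plane `0` is the
`(r, θ)`-plane. -/
def xIndex (i : Fin n) : Fin (2 * n + 1) := ⟨2 * i + 1, by lia⟩

/-- The index of the second Cartesian coordinate of the `i`-th plane of `ℝ × (ℝ²)ⁿ`. -/
def yIndex (i : Fin n) : Fin (2 * n + 1) := ⟨2 * i + 2, by lia⟩

@[to_additive]
theorem prod_ofFn_xIndex_yIndex {A : Type*} [Monoid A] (x : Fin (2 * n + 1) → A) :
    (List.ofFn x).prod = x 0 * (List.ofFn fun i => x (xIndex i) * x (yIndex i)).prod := by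
  rw [List.ofFn_succ, List.prod_cons, List.ofFn_mul', List.prod_flatten, List.map_ofFn]
  congr 3
  ext i
  simp [xIndex, yIndex, Fin.succ]

theorem sum_univ_xIndex_yIndex {A : Type*} [AddCommMonoid A] (x : Fin (2 * n + 1) → A) :
    ∑ j, x j = x 0 + ∑ i, (x (xIndex i) + x (yIndex i)) := by
  rw [← List.sum_ofFn, sum_ofFn_xIndex_yIndex, List.sum_ofFn]

end Coordinates

section Differential

variable {N : ℕ}

/-- The coordinate 1-form `dx_j` on `ℝᴺ`. -/
noncomputable abbrev dCoord (j : Fin N) : ExteriorAlgebra ℝ (Fin N → ℝ) := ι ℝ (Pi.single j 1)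

/-- A linear functional on `ℝᴺ` as a 1-form, so that `covectorForm (fderiv ℝ f p)` is `df` at
`p`. -/
noncomputable def covectorForm : ((Fin N → ℝ) →L[ℝ] ℝ) →ₗ[ℝ] ExteriorAlgebra ℝ (Fin N → ℝ) where
  toFun L := ∑ i, L (Pi.single i 1) • dCoord i
  map_add' L L' := by simp [add_smul, Finset.sum_add_distrib]
  map_smul' c L := by simp [Finset.smul_sum, smul_smul]

theorem covectorForm_proj (j : Fin N) : covectorForm (.proj j) = dCoord j := by
  simp [covectorForm, Pi.single_apply]

theorem sum_sum_fderiv_smul_eq (a : Fin N → (Fin N → ℝ) → ℝ) (p : Fin N → ℝ) :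
    ∑ i, ∑ j, fderiv ℝ (a j) p (Pi.single i 1) • (dCoord i * dCoord j) =
      ∑ j, covectorForm (fderiv ℝ (a j) p) * dCoord j := by
  rw [Finset.sum_comm]
  simp [covectorForm, Finset.sum_mul]

end Differential

section Mori

variable {m : ℕ}

theorem coordAt_val {n : ℕ} (p : Fin (2 * n + 1) → ℝ) (k : Fin (2 * n + 1)) :
    coordAt n p k = p k :=
  dif_pos k.2

/-- The function `r²` on `ℝ^{2m+3}`. -/
def radiusSq (p : Fin (2 * (m + 1) + 1) → ℝ) : ℝ := p (xIndex 0) ^ 2 + p (yIndex 0) ^ 2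

theorem coordAt_one (p : Fin (2 * (m + 1) + 1) → ℝ) : coordAt (m + 1) p 1 = p (xIndex 0) :=
  coordAt_val p (xIndex 0)

theorem coordAt_two (p : Fin (2 * (m + 1) + 1) → ℝ) : coordAt (m + 1) p 2 = p (yIndex 0) :=
  coordAt_val p (yIndex 0)

theorem moriCoeff_zero (p : Fin (2 * (m + 1) + 1) → ℝ) :
    moriCoeff (m + 1) 0 p = 2 * radiusSq p - 1 := by
  simp [moriCoeff, coordAt_one, coordAt_two, radiusSq]

theorem moriCoeff_xIndex_zero (p : Fin (2 * (m + 1) + 1) → ℝ) :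
    moriCoeff (m + 1) (xIndex (0 : Fin (m + 1))) p = -((radiusSq p - 1) * p (yIndex 0)) := by
  simp [moriCoeff, coordAt_one, coordAt_two, radiusSq, xIndex]

theorem moriCoeff_yIndex_zero (p : Fin (2 * (m + 1) + 1) → ℝ) :
    moriCoeff (m + 1) (yIndex (0 : Fin (m + 1))) p = (radiusSq p - 1) * p (xIndex 0) := by
  simp [moriCoeff, coordAt_one, coordAt_two, radiusSq, yIndex]

theorem moriCoeff_xIndex_succ (i : Fin m) (p : Fin (2 * (m + 1) + 1) → ℝ) :
    moriCoeff (m + 1) (xIndex i.succ) p = -p (yIndex i.succ) := by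
  have hodd : (2 * ((i : ℕ) + 1) + 1) % 2 = 1 := by lia
  simp [moriCoeff, xIndex, ← coordAt_val, yIndex, hodd]

theorem moriCoeff_yIndex_succ (i : Fin m) (p : Fin (2 * (m + 1) + 1) → ℝ) :
    moriCoeff (m + 1) (yIndex i.succ) p = p (xIndex i.succ) := by
  simp [moriCoeff, xIndex, ← coordAt_val, yIndex]

theorem sum_moriCoeff (p : Fin (2 * (m + 1) + 1) → ℝ) :
    ∑ j : Fin (2 * (m + 1) + 1), moriCoeff (m + 1) j p • dCoord j =
      (2 * radiusSq p - 1) • dCoord 0 + (-((radiusSq p - 1) * p (yIndex 0))) • dCoord (xIndex 0) +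
        ((radiusSq p - 1) * p (xIndex 0)) • dCoord (yIndex 0) +
        ∑ i : Fin m, ((-p (yIndex i.succ)) • dCoord (xIndex i.succ) +
          p (xIndex i.succ) • dCoord (yIndex i.succ)) := by
  simp only [sum_univ_xIndex_yIndex, Fin.sum_univ_succ, Fin.val_zero, moriCoeff_zero,
    moriCoeff_xIndex_zero, moriCoeff_yIndex_zero, moriCoeff_xIndex_succ, moriCoeff_yIndex_succ,
    add_assoc]

theorem hasFDerivAt_radiusSq (p : Fin (2 * (m + 1) + 1) → ℝ) :
    HasFDerivAt radiusSq
      ((2 * p (xIndex 0)) • .proj (xIndex 0) + (2 * p (yIndex 0)) • .proj (yIndex 0) :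
        (Fin (2 * (m + 1) + 1) → ℝ) →L[ℝ] ℝ) p := by
  have h : HasFDerivAt radiusSq _ p := ((hasFDerivAt_apply (𝕜 := ℝ) (xIndex 0) p).pow 2).add
    ((hasFDerivAt_apply (𝕜 := ℝ) (yIndex 0) p).pow 2)
  simpa using h

theorem covectorForm_fderiv_radiusSq (p : Fin (2 * (m + 1) + 1) → ℝ) :
    covectorForm (fderiv ℝ radiusSq p) =
      (2 * p (xIndex 0)) • dCoord (xIndex 0) + (2 * p (yIndex 0)) • dCoord (yIndex 0) := by
  rw [(hasFDerivAt_radiusSq p).fderiv, map_add, map_smul, map_smul, covectorForm_proj,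
    covectorForm_proj]

theorem covectorForm_fderiv_moriCoeff_zero (p : Fin (2 * (m + 1) + 1) → ℝ) :
    covectorForm (fderiv ℝ (moriCoeff (m + 1) 0) p) =
      (2 : ℝ) • covectorForm (fderiv ℝ radiusSq p) := by
  have hd := (hasFDerivAt_radiusSq p).differentiableAt
  rw [funext moriCoeff_zero, fderiv_sub_const, fderiv_const_mul hd, map_smul]

theorem covectorForm_fderiv_radiusSq_sub_one_mul (p : Fin (2 * (m + 1) + 1) → ℝ)
    (j : Fin (2 * (m + 1) + 1)) :
    covectorForm (fderiv ℝ (fun q => (radiusSq q - 1) * q j) p) =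
      (radiusSq p - 1) • dCoord j + p j • covectorForm (fderiv ℝ radiusSq p) := by
  have hd := (hasFDerivAt_radiusSq p).differentiableAt
  rw [((hd.hasFDerivAt.sub_const 1).fun_mul (hasFDerivAt_apply j p)).fderiv, map_add, map_smul,
    map_smul, covectorForm_proj]

theorem covectorForm_fderiv_moriCoeff_xIndex_zero (p : Fin (2 * (m + 1) + 1) → ℝ) :
    covectorForm (fderiv ℝ (moriCoeff (m + 1) (xIndex (0 : Fin (m + 1)))) p) =
      -((radiusSq p - 1) • dCoord (yIndex 0) +
        p (yIndex 0) • covectorForm (fderiv ℝ radiusSq p)) := by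
  rw [funext moriCoeff_xIndex_zero, fderiv_fun_neg, map_neg,
    covectorForm_fderiv_radiusSq_sub_one_mul]

theorem covectorForm_fderiv_moriCoeff_yIndex_zero (p : Fin (2 * (m + 1) + 1) → ℝ) :
    covectorForm (fderiv ℝ (moriCoeff (m + 1) (yIndex (0 : Fin (m + 1)))) p) =
      (radiusSq p - 1) • dCoord (xIndex 0) +
        p (xIndex 0) • covectorForm (fderiv ℝ radiusSq p) := by
  rw [funext moriCoeff_yIndex_zero, covectorForm_fderiv_radiusSq_sub_one_mul]

theorem covectorForm_fderiv_moriCoeff_xIndex_succ (i : Fin m) (p : Fin (2 * (m + 1) + 1) → ℝ) :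
    covectorForm (fderiv ℝ (moriCoeff (m + 1) (xIndex i.succ)) p) = -dCoord (yIndex i.succ) := by
  rw [funext (moriCoeff_xIndex_succ i), fderiv_fun_neg, (hasFDerivAt_apply _ p).fderiv, map_neg,
    covectorForm_proj]

theorem covectorForm_fderiv_moriCoeff_yIndex_succ (i : Fin m) (p : Fin (2 * (m + 1) + 1) → ℝ) :
    covectorForm (fderiv ℝ (moriCoeff (m + 1) (yIndex i.succ)) p) = dCoord (xIndex i.succ) := by
  rw [funext (moriCoeff_yIndex_succ i), (hasFDerivAt_apply _ p).fderiv, covectorForm_proj]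

theorem sum_sum_fderiv_moriCoeff (p : Fin (2 * (m + 1) + 1) → ℝ) :
    ∑ i, ∑ j : Fin (2 * (m + 1) + 1),
        fderiv ℝ (moriCoeff (m + 1) j) p (Pi.single i 1) • (dCoord i * dCoord j) =
      twoForm (Pi.single 0 1) (Pi.single (xIndex 0) 1) (Pi.single (yIndex 0) 1)
          (4 * radiusSq p - 2) (4 * p (yIndex 0)) (-(4 * p (xIndex 0))) +
        (2 : ℝ) • symplecticForm ℝ (fun i : Fin m => Pi.single (xIndex i.succ) 1)
          fun i => Pi.single (yIndex i.succ) 1 := by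
  have hplane (i : Fin m) :
      -dCoord (yIndex i.succ) * dCoord (xIndex i.succ) +
          dCoord (xIndex i.succ) * dCoord (yIndex i.succ) =
        (2 : ℝ) • (dCoord (xIndex i.succ) * dCoord (yIndex i.succ)) := by
    rw [neg_mul, ι_mul_ι_swap (Pi.single (yIndex _) _), neg_neg, two_smul]
  rw [sum_sum_fderiv_smul_eq (fun j => moriCoeff (m + 1) j), sum_univ_xIndex_yIndex,
    Fin.sum_univ_succ, symplecticForm, Finset.smul_sum, ← add_assoc]
  simp only [covectorForm_fderiv_moriCoeff_xIndex_succ, covectorForm_fderiv_moriCoeff_yIndex_succ,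
    hplane]
  congr 1
  simp only [Fin.val_zero, covectorForm_fderiv_moriCoeff_zero,
    covectorForm_fderiv_moriCoeff_xIndex_zero, covectorForm_fderiv_moriCoeff_yIndex_zero,
    covectorForm_fderiv_radiusSq, twoForm, add_mul, neg_mul, smul_add, smul_mul_assoc, ι_sq_zero,
    ι_mul_ι_swap (Pi.single (yIndex 0) _) (Pi.single (xIndex 0) _),
    ι_mul_ι_swap (Pi.single (xIndex 0) _) (Pi.single 0 _), radiusSq]
  module

theorem volume_form_ne_zero (m : ℕ) :
    dCoord (0 : Fin (2 * (m + 1) + 1)) * (dCoord (xIndex 0) * dCoord (yIndex 0)) *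
      (List.ofFn fun i : Fin m => dCoord (xIndex i.succ) * dCoord (yIndex i.succ)).prod ≠ 0 := by
  have h := prod_ofFn_ι_ne_zero (Pi.basisFun ℝ (Fin (2 * (m + 1) + 1))).linearIndependent
  rw [prod_ofFn_xIndex_yIndex, List.ofFn_succ, List.prod_cons, ← mul_assoc] at h
  simpa only [Pi.basisFun_apply] using h

end Mori

/-- The 1-form `α = (2r² − 1)dz + r²(r² − 1)dθ + Σᵢ ρᵢ² dφᵢ` on
`ℝ^{2n+1}` is a contact form: `α ∧ (dα)^n` is nowhere vanishing.  Here `α` and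
`dα` are represented pointwise in the exterior algebra of `ℝ^{2n+1}`:
`α = Σⱼ aⱼ dxⱼ` with `aⱼ = moriCoeff n j`, and
`dα = Σᵢⱼ (∂aⱼ/∂xᵢ) dxᵢ∧dxⱼ`. -/
theorem mori_alpha_contact (n : ℕ) (hn : 1 ≤ n) (p : Fin (2 * n + 1) → ℝ) :
    (∑ j : Fin (2 * n + 1), moriCoeff n j p •
        ExteriorAlgebra.ι ℝ (Pi.single j (1 : ℝ) : Fin (2 * n + 1) → ℝ)) *
      (∑ i : Fin (2 * n + 1), ∑ j : Fin (2 * n + 1),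
        fderiv ℝ (moriCoeff n (j : ℕ)) p (Pi.single i (1 : ℝ)) •
          (ExteriorAlgebra.ι ℝ (Pi.single i (1 : ℝ) : Fin (2 * n + 1) → ℝ) *
           ExteriorAlgebra.ι ℝ (Pi.single j (1 : ℝ) : Fin (2 * n + 1) → ℝ))) ^ n
      ≠ 0 := by
  obtain ⟨m, rfl⟩ := Nat.exists_eq_add_of_le' hn
  rw [sum_moriCoeff, sum_sum_fderiv_moriCoeff, one_form_mul_twoForm_add_symplecticForm_pow_succ]
  have hcontact : (2 * radiusSq p - 1) * (4 * radiusSq p - 2) +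
      -((radiusSq p - 1) * p (yIndex 0)) * (4 * p (yIndex 0)) +
      (radiusSq p - 1) * p (xIndex 0) * -(4 * p (xIndex 0)) = (2 * radiusSq p - 1) ^ 2 + 1 := by
    unfold radiusSq
    ring
  rw [hcontact]
  exact smul_ne_zero (by positivity) (volume_form_ne_zero m)
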